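/- arXiv:0803.3469 — 7 statements merged into one kernel-verified Lean document; each statement's English description precedes it below -/
import Mathlib

section
/- Fix integers g ≥ 2, k with 1 ≤ k ≤ g−1, i ≥ 0, and s ≥ 1. For every τ₁ ∈ ℍ_k and τ₂ ∈ ℍ_{g−k}, the restriction of P_{i,s}^{(g)} to the block-diagonal locus factors as P_{i,s}^{(g)}(τ₁ ⊕ τ₂) = Σ_{n=0}^{i} Σ_{m=0}^{i} N(n,m;i) · P_{n,2^{i−n}s}^{(k)}(τ₁) · P_{m,2^{i−m}s}^{(g−k)}(τ₂), where the summands with n+m < i vanish because N(n,m;i) = 0 there. -/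
open scoped BigOperators

abbrev ThetaChar (g : ℕ) := (Fin g → ZMod 2) × (Fin g → ZMod 2)

/-- Theta constant with characteristic `v = [ε; δ]`. -/
noncomputable def theta {g : ℕ} (v : ThetaChar g) (τ : Matrix (Fin g) (Fin g) ℂ) : ℂ :=
  ∑' n : Fin g → ℤ,
    Complex.exp ((Real.pi : ℂ) * Complex.I *
      ((∑ i, ∑ j, ((n i : ℂ) + ((v.1 i).val : ℂ) / 2) * τ i j *
          ((n j : ℂ) + ((v.1 j).val : ℂ) / 2)) +
        ∑ i, ((n i : ℂ) + ((v.1 i).val : ℂ) / 2) * ((v.2 i).val : ℂ)))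

/-- Siegel upper half-space membership. -/
def IsSiegel {g : ℕ} (τ : Matrix (Fin g) (Fin g) ℂ) : Prop :=
  τ.IsSymm ∧ Matrix.PosDef (τ.map Complex.im)

noncomputable def Pset {g : ℕ} (M : Set (ThetaChar g)) (τ : Matrix (Fin g) (Fin g) ℂ) : ℂ :=
  ∏ᶠ v ∈ M, theta v τ

noncomputable def Pform (g i s : ℕ) (τ : Matrix (Fin g) (Fin g) ℂ) : ℂ :=
  ∑ᶠ V ∈ {V : Submodule (ZMod 2) (ThetaChar g) | Module.finrank (ZMod 2) ↥V = i},
    Pset (V : Set (ThetaChar g)) τ ^ s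

noncomputable def Nsub (n m i : ℕ) : ℕ :=
  Nat.card {V : Submodule (ZMod 2) ((Fin n → ZMod 2) × (Fin m → ZMod 2)) //
    Module.finrank (ZMod 2) ↥V = i ∧
    V.map (LinearMap.fst (ZMod 2) (Fin n → ZMod 2) (Fin m → ZMod 2)) = ⊤ ∧
    V.map (LinearMap.snd (ZMod 2) (Fin n → ZMod 2) (Fin m → ZMod 2)) = ⊤}

noncomputable def blockDiag {k l : ℕ} (τ₁ : Matrix (Fin k) (Fin k) ℂ)
    (τ₂ : Matrix (Fin l) (Fin l) ℂ) : Matrix (Fin (k + l)) (Fin (k + l)) ℂ :=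
  Matrix.reindex finSumFinEquiv finSumFinEquiv (Matrix.fromBlocks τ₁ 0 0 τ₂)

def chproj1 (k l : ℕ) : ThetaChar (k + l) →ₗ[ZMod 2] ThetaChar k :=
  (LinearMap.funLeft (ZMod 2) (ZMod 2) (Fin.castAdd l)).prodMap
    (LinearMap.funLeft (ZMod 2) (ZMod 2) (Fin.castAdd l))

def chproj2 (k l : ℕ) : ThetaChar (k + l) →ₗ[ZMod 2] ThetaChar l :=
  (LinearMap.funLeft (ZMod 2) (ZMod 2) (Fin.natAdd k)).prodMap
    (LinearMap.funLeft (ZMod 2) (ZMod 2) (Fin.natAdd k))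

def weil {g : ℕ} (v w : ThetaChar g) : ZMod 2 :=
  (∑ i, v.1 i * w.2 i) + (∑ i, v.2 i * w.1 i)

def evenChar {g : ℕ} (v : ThetaChar g) : Prop := (∑ i, v.1 i * v.2 i) = 0

def qform {g : ℕ} (Δ v : ThetaChar g) : ZMod 2 :=
  (∑ i, v.1 i * v.2 i) + (∑ i, Δ.1 i * v.2 i) + (∑ i, Δ.2 i * v.1 i)


/-- Product formula for double sums of nonvanishing terms, with no summability hypothesis. -/
lemma aux_tsum_mul {α β : Type*} (f : α → ℂ) (h : β → ℂ) (hf : ∃ a, f a ≠ 0)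
    (hh : ∃ b, h b ≠ 0) :
    ∑' p : α × β, f p.1 * h p.2 = (∑' a, f a) * ∑' b, h b := by
  obtain ⟨a0, ha0⟩ := hf
  obtain ⟨b0, hb0⟩ := hh
  by_cases hsf : Summable f
  · by_cases hsh : Summable h
    · exact (tsum_mul_tsum_of_summable_norm hsf.norm hsh.norm).symm
    · rw [tsum_eq_zero_of_not_summable hsh, mul_zero, tsum_eq_zero_of_not_summable]
      intro H
      apply hsh
      have := H.comp_injective (i := fun b => (a0, b)) (fun x y hxy => by simpa using hxy)
      exact (summable_mul_left_iff ha0).1 this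
  · rw [tsum_eq_zero_of_not_summable hsf, zero_mul, tsum_eq_zero_of_not_summable]
    intro H
    apply hsf
    have := H.comp_injective (i := fun a => (a, b0)) (fun x y hxy => by simpa using hxy)
    exact (summable_mul_right_iff hb0).1 this

lemma aux_theta_block {k l : ℕ} (v : ThetaChar (k + l)) (τ₁ : Matrix (Fin k) (Fin k) ℂ)
    (τ₂ : Matrix (Fin l) (Fin l) ℂ) :
    theta v (blockDiag τ₁ τ₂) = theta (chproj1 k l v) τ₁ * theta (chproj2 k l v) τ₂ := by
  unfold theta
  refine Eq.trans ?_ (aux_tsum_mul _ _ ?_ ?_)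
  rotate_left
  · exact ⟨0, Complex.exp_ne_zero _⟩
  · exact ⟨0, Complex.exp_ne_zero _⟩
  rw [← (Fin.appendEquiv k l).tsum_eq]
  refine tsum_congr fun p => ?_
  rw [← Complex.exp_add]
  congr 1
  simp [Fin.sum_univ_add, blockDiag, Fin.appendEquiv, chproj1, chproj2, LinearMap.funLeft]
  ring

lemma aux_prod_fiber {V U : Type*} [AddCommGroup V] [AddCommGroup U] [Module (ZMod 2) V]
    [Module (ZMod 2) U] [Fintype V] [Fintype U] (p : V →ₗ[ZMod 2] U)
    (hp : Function.Surjective p) (F : U → ℂ) :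
    ∏ v, F (p v) =
      (∏ u, F u) ^ (2 ^ (Module.finrank (ZMod 2) V - Module.finrank (ZMod 2) U)) := by
  classical
  have hker : Module.finrank (ZMod 2) (LinearMap.ker p) =
      Module.finrank (ZMod 2) V - Module.finrank (ZMod 2) U := by
    have := LinearMap.finrank_range_add_finrank_ker p
    rw [LinearMap.range_eq_top.2 hp, finrank_top] at this
    omega
  have hcard : ∀ u : U, (Finset.univ.filter fun v => p v = u).card =
      2 ^ (Module.finrank (ZMod 2) V - Module.finrank (ZMod 2) U) := by
    intro u
    have h1 : (Finset.univ.filter fun v => p v = u).card =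
        (Finset.univ.filter fun v => p v = 0).card :=
      AddMonoidHom.card_fiber_eq_of_mem_range p.toAddMonoidHom (hp u) (hp 0)
    rw [h1, ← hker, ← Fintype.card_subtype]
    have := Module.card_eq_pow_finrank (K := ZMod 2) (V := LinearMap.ker p)
    rw [ZMod.card] at this
    rw [← this]
    exact Fintype.card_congr (Equiv.refl _)
  rw [← Finset.prod_fiberwise Finset.univ p, ← Finset.prod_pow]
  refine Finset.prod_congr rfl fun u _ => ?_
  rw [Finset.prod_congr rfl (g := fun _ => F u) (by simp +contextual), Finset.prod_const, hcard]

lemma aux_card {A B : Type*} [AddCommGroup A] [AddCommGroup B] [Module (ZMod 2) A]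
    [Module (ZMod 2) B] [Finite A] [Finite B] (i : ℕ) (U : Submodule (ZMod 2) A)
    (W : Submodule (ZMod 2) B) :
    Nat.card {V : Submodule (ZMod 2) (A × B) // Module.finrank (ZMod 2) V = i ∧
      V.map (LinearMap.fst (ZMod 2) A B) = U ∧ V.map (LinearMap.snd (ZMod 2) A B) = W} =
    Nsub (Module.finrank (ZMod 2) U) (Module.finrank (ZMod 2) W) i := by
  classical
  let eU := (Module.finBasis (ZMod 2) U).equivFun
  let eW := (Module.finBasis (ZMod 2) W).equivFun
  let jU := U.subtype ∘ₗ eU.symm.toLinearMap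
  let jW := W.subtype ∘ₗ eW.symm.toLinearMap
  have hjU : Function.Injective jU := by
    exact U.injective_subtype.comp eU.symm.injective
  have hjW : Function.Injective jW := by
    exact W.injective_subtype.comp eW.symm.injective
  have hrU : LinearMap.range jU = U := by simp [jU, LinearMap.range_comp]
  have hrW : LinearMap.range jW = W := by simp [jW, LinearMap.range_comp]
  let j := jU.prodMap jW
  have hj : Function.Injective j := by
    intro x y hxy
    have h1 := congrArg Prod.fst hxy
    have h2 := congrArg Prod.snd hxy
    exact Prod.ext (hjU h1) (hjW h2)
  have hfst : ∀ V : Submodule (ZMod 2) ((Fin (Module.finrank (ZMod 2) U) → ZMod 2) ×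
      (Fin (Module.finrank (ZMod 2) W) → ZMod 2)), (V.map j).map (LinearMap.fst (ZMod 2) A B) =
      (V.map (LinearMap.fst (ZMod 2) _ _)).map jU := by
    intro V
    rw [← Submodule.map_comp, ← Submodule.map_comp]
    rfl
  have hsnd : ∀ V : Submodule (ZMod 2) ((Fin (Module.finrank (ZMod 2) U) → ZMod 2) ×
      (Fin (Module.finrank (ZMod 2) W) → ZMod 2)), (V.map j).map (LinearMap.snd (ZMod 2) A B) =
      (V.map (LinearMap.snd (ZMod 2) _ _)).map jW := by
    intro V
    rw [← Submodule.map_comp, ← Submodule.map_comp]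
    rfl
  have hfr : ∀ V : Submodule (ZMod 2) ((Fin (Module.finrank (ZMod 2) U) → ZMod 2) ×
      (Fin (Module.finrank (ZMod 2) W) → ZMod 2)), Module.finrank (ZMod 2) (V.map j) = Module.finrank (ZMod 2) V := fun V =>
    (Submodule.equivMapOfInjective j hj V).finrank_eq.symm
  symm
  unfold Nsub
  refine Nat.card_eq_of_bijective (fun V => ⟨V.1.map j, ?_, ?_, ?_⟩) ⟨?_, ?_⟩
  · rw [hfr]; exact V.2.1
  · rw [hfst, V.2.2.1, Submodule.map_top, hrU]
  · rw [hsnd, V.2.2.2, Submodule.map_top, hrW]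
  · intro V V' h
    exact Subtype.ext (Submodule.map_injective_of_injective hj (congrArg Subtype.val h))
  · rintro ⟨V, h1, h2, h3⟩
    have hV : (V.comap j).map j = V := by
      apply Submodule.map_comap_eq_self
      intro x hx
      have hx1 : x.1 ∈ LinearMap.range jU := by
        rw [hrU, ← h2]; exact ⟨x, hx, rfl⟩
      have hx2 : x.2 ∈ LinearMap.range jW := by
        rw [hrW, ← h3]; exact ⟨x, hx, rfl⟩
      obtain ⟨a, ha⟩ := hx1
      obtain ⟨b, hb⟩ := hx2
      exact ⟨(a, b), Prod.ext ha hb⟩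
    refine ⟨⟨V.comap j, ?_, ?_, ?_⟩, Subtype.ext hV⟩
    · rw [← hfr, hV, h1]
    · apply Submodule.map_injective_of_injective hjU
      rw [← hfst, hV, h2, Submodule.map_top, hrU]
    · apply Submodule.map_injective_of_injective hjW
      rw [← hsnd, hV, h3, Submodule.map_top, hrW]

lemma aux_Nsub_zero (n m i : ℕ) (h : i < n ∨ i < m) : Nsub n m i = 0 := by
  unfold Nsub
  rw [Nat.card_eq_zero]
  left
  constructor
  rintro ⟨V, h1, h2, h3⟩
  have a1 := Submodule.finrank_map_le (LinearMap.fst (ZMod 2) (Fin n → ZMod 2) (Fin m → ZMod 2)) V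
  have a2 := Submodule.finrank_map_le (LinearMap.snd (ZMod 2) (Fin n → ZMod 2) (Fin m → ZMod 2)) V
  rw [h2, finrank_top, Module.finrank_fin_fun] at a1
  rw [h3, finrank_top, Module.finrank_fin_fun] at a2
  omega

open Classical in
/-- The abstract sum of products over subspaces of dimension `i`. -/
noncomputable def auxP {A : Type*} [AddCommGroup A] [Module (ZMod 2) A] [Fintype A]
    (f : A → ℂ) (i s : ℕ) : ℂ :=
  ∑ V : Submodule (ZMod 2) A, if Module.finrank (ZMod 2) V = i then (∏ v : V, f v) ^ s else 0

lemma aux_Pform (g i s : ℕ) (τ : Matrix (Fin g) (Fin g) ℂ) :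
    Pform g i s τ = auxP (fun v => theta v τ) i s := by
  classical
  unfold Pform auxP
  rw [finsum_mem_def, finsum_eq_sum_of_fintype]
  refine Finset.sum_congr rfl fun V _ => ?_
  have h2 : Pset (V : Set (ThetaChar g)) τ = ∏ v : V, theta v.1 τ := by
    unfold Pset
    rw [finprod_mem_eq_toFinset_prod, Finset.prod_subtype]
    simp
  rw [Set.indicator_apply, h2]
  rfl

open Classical in
lemma aux_P_prod {A B : Type*} [AddCommGroup A] [AddCommGroup B] [Module (ZMod 2) A]
    [Module (ZMod 2) B] [Fintype A] [Fintype B] (f : A → ℂ) (h : B → ℂ) (i s : ℕ) :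
    auxP (fun x : A × B => f x.1 * h x.2) i s =
      ∑ n ∈ Finset.range (i + 1), ∑ m ∈ Finset.range (i + 1),
        (Nsub n m i : ℂ) * auxP f n (2 ^ (i - n) * s) * auxP h m (2 ^ (i - m) * s) := by
  let a : Submodule (ZMod 2) A → ℂ := fun U =>
    (∏ v : U, f v) ^ (2 ^ (i - Module.finrank (ZMod 2) U) * s)
  let b : Submodule (ZMod 2) B → ℂ := fun U =>
    (∏ v : U, h v) ^ (2 ^ (i - Module.finrank (ZMod 2) U) * s)
  have hL : auxP (fun x : A × B => f x.1 * h x.2) i s =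
      ∑ U : Submodule (ZMod 2) A, ∑ W : Submodule (ZMod 2) B,
        (Nsub (Module.finrank (ZMod 2) U) (Module.finrank (ZMod 2) W) i : ℂ) * (a U * b W) := by
    have h1 : ∀ V : Submodule (ZMod 2) (A × B),
        (if Module.finrank (ZMod 2) V = i then (∏ v : V, f v.1.1 * h v.1.2) ^ s else 0) =
        ∑ U : Submodule (ZMod 2) A, ∑ W : Submodule (ZMod 2) B,
          if (Module.finrank (ZMod 2) V = i ∧ V.map (LinearMap.fst (ZMod 2) A B) = U ∧
            V.map (LinearMap.snd (ZMod 2) A B) = W) then a U * b W else 0 := by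
      intro V
      by_cases hV : Module.finrank (ZMod 2) V = i
      · simp only [hV, true_and, if_true, ite_and, Finset.sum_ite_irrel, Finset.sum_const_zero,
          Finset.sum_ite_eq, Finset.mem_univ]
        have e1 := aux_prod_fiber ((LinearMap.fst (ZMod 2) A B).submoduleMap V)
          (LinearMap.submoduleMap_surjective _ V) (fun u => f u)
        have e2 := aux_prod_fiber ((LinearMap.snd (ZMod 2) A B).submoduleMap V)
          (LinearMap.submoduleMap_surjective _ V) (fun u => h u)
        simp only [LinearMap.submoduleMap_coe_apply, LinearMap.fst_apply, LinearMap.snd_apply,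
          hV] at e1 e2
        rw [Finset.prod_mul_distrib, mul_pow, e1, e2, ← pow_mul, ← pow_mul]
      · simp [hV]
    unfold auxP
    rw [Finset.sum_congr rfl fun V _ => h1 V, Finset.sum_comm]
    refine Finset.sum_congr rfl fun U _ => ?_
    rw [Finset.sum_comm]
    refine Finset.sum_congr rfl fun W _ => ?_
    rw [← aux_card i U W, ← Finset.sum_filter, Finset.sum_const, nsmul_eq_mul,
      Nat.card_eq_fintype_card, Fintype.card_subtype]
  rw [hL]
  have hR : ∀ n m, (Nsub n m i : ℂ) * auxP f n (2 ^ (i - n) * s) * auxP h m (2 ^ (i - m) * s) =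
      ∑ U : Submodule (ZMod 2) A, ∑ W : Submodule (ZMod 2) B,
        if Module.finrank (ZMod 2) U = n then if Module.finrank (ZMod 2) W = m then
          (Nsub (Module.finrank (ZMod 2) U) (Module.finrank (ZMod 2) W) i : ℂ) * (a U * b W)
          else 0 else 0 := by
    intro n m
    unfold auxP
    rw [mul_assoc, Finset.sum_mul_sum, Finset.mul_sum]
    refine Finset.sum_congr rfl fun U _ => ?_
    rw [Finset.mul_sum]
    refine Finset.sum_congr rfl fun W _ => ?_
    by_cases hU : Module.finrank (ZMod 2) U = n
    · by_cases hW : Module.finrank (ZMod 2) W = m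
      · subst hU hW
        simp [a, b]
      · simp [hW]
    · simp [hU]
  simp only [hR]
  symm
  refine (Finset.sum_congr rfl fun n _ => Finset.sum_comm).trans (Finset.sum_comm.trans ?_)
  refine Finset.sum_congr rfl fun U _ => ?_
  refine (Finset.sum_congr rfl fun n _ => Finset.sum_comm).trans (Finset.sum_comm.trans ?_)
  refine Finset.sum_congr rfl fun W _ => ?_
  by_cases hU : i < Module.finrank (ZMod 2) U
  · simp [aux_Nsub_zero _ (Module.finrank (ZMod 2) W) i (Or.inl hU)]
  by_cases hW : i < Module.finrank (ZMod 2) W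
  · simp [aux_Nsub_zero (Module.finrank (ZMod 2) U) _ i (Or.inr hW)]
  simp only [Finset.sum_ite_irrel, Finset.sum_const_zero, Finset.sum_ite_eq, Finset.mem_range]
  rw [if_pos (by omega), if_pos (by omega)]

lemma auxP_equiv {A B : Type*} [AddCommGroup A] [AddCommGroup B] [Module (ZMod 2) A]
    [Module (ZMod 2) B] [Fintype A] [Fintype B] (e : A ≃ₗ[ZMod 2] B) (f : B → ℂ) (i s : ℕ) :
    auxP (fun x => f (e x)) i s = auxP f i s := by
  classical
  unfold auxP
  rw [← (Submodule.orderIsoMapComap e).toEquiv.sum_comp]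
  refine Finset.sum_congr rfl fun V _ => ?_
  have h0 : ((Submodule.orderIsoMapComap e).toEquiv V) = V.map e.toLinearMap := rfl
  rw [h0]
  have h1 := (e.submoduleMap V).finrank_eq
  have h2 := Equiv.prod_comp (e.submoduleMap V).toEquiv (fun x => f x)
  rw [← h1, ← h2]
  rfl

/-- Splitting of characteristics. -/
noncomputable def auxSplit (k l : ℕ) : ThetaChar (k + l) ≃ₗ[ZMod 2] ThetaChar k × ThetaChar l :=
  LinearEquiv.ofBijective ((chproj1 k l).prod (chproj2 k l)) (by
    constructor
    · intro x y hxy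
      have h1 := congrArg Prod.fst hxy
      have h2 := congrArg Prod.snd hxy
      have h11 := congrArg Prod.fst h1
      have h12 := congrArg Prod.snd h1
      have h21 := congrArg Prod.fst h2
      have h22 := congrArg Prod.snd h2
      refine Prod.ext ?_ ?_
      · funext t
        refine Fin.addCases (fun t => congrFun h11 t) (fun t => congrFun h21 t) t
      · funext t
        refine Fin.addCases (fun t => congrFun h12 t) (fun t => congrFun h22 t) t
    · rintro ⟨⟨a, b⟩, c, d⟩
      refine ⟨(Fin.append a c, Fin.append b d), ?_⟩
      ext t <;> simp [chproj1, chproj2, LinearMap.funLeft])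

theorem restriction_of_P_to_decomposable_locus
    (k l i s : ℕ) (hk : 1 ≤ k) (hl : 1 ≤ l) (hs : 1 ≤ s)
    (τ₁ : Matrix (Fin k) (Fin k) ℂ) (τ₂ : Matrix (Fin l) (Fin l) ℂ)
    (hτ₁ : IsSiegel τ₁) (hτ₂ : IsSiegel τ₂) :
    Pform (k + l) i s (blockDiag τ₁ τ₂) =
      ∑ n ∈ Finset.range (i + 1), ∑ m ∈ Finset.range (i + 1),
        (Nsub n m i : ℂ) * Pform k n (2 ^ (i - n) * s) τ₁ *
          Pform l m (2 ^ (i - m) * s) τ₂ := by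
  simp only [aux_Pform, aux_theta_block]
  rw [← aux_P_prod]
  exact auxP_equiv (auxSplit k l)
    (fun x : ThetaChar k × ThetaChar l => theta x.1 τ₁ * theta x.2 τ₂) i s
end

section
/- For all nonnegative integers n, m, i with i ≤ n+m, the counting function satisfies N(n,m;i) · Π_{j=0}^{n+m−i−1} (2^{n+m−i} − 2^j) = Π_{j=0}^{n+m−i−1} (2^n − 2^j)(2^m − 2^j) (empty products being 1, so N(n,m;n+m) = 1), and N(n,m;i) = 0 whenever i > n+m. In particular N(n,m;i) = 0 whenever n > i or m > i and i < n+m, since one of the factors on the right then vanishes. -/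
open scoped BigOperators

abbrev NsubVec (n : ℕ) := Fin n → ZMod 2

abbrev NsubSurj (n d : ℕ) := {f : NsubVec n →ₗ[ZMod 2] NsubVec d // Function.Surjective f}

lemma nsub_surj_iff (n d : ℕ) (f : NsubVec n →ₗ[ZMod 2] NsubVec d) :
    Function.Surjective f ↔ LinearIndependent (ZMod 2) (LinearMap.toMatrix' f).row := by
  rw [linearIndependent_iff_card_eq_finrank_span, Set.finrank,
    ← Matrix.rank_eq_finrank_span_row, Matrix.rank, ← Matrix.toLin'_apply', Matrix.toLin'_toMatrix',
    ← LinearMap.range_eq_top]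
  constructor
  · intro h
    rw [h]
    simp
  · intro h
    apply Submodule.eq_top_of_finrank_eq
    rw [← h]
    simp

lemma nsub_card_surj (n d : ℕ) :
    (Nat.card (NsubSurj n d) : ℤ) = ∏ j ∈ Finset.range d, ((2 : ℤ) ^ n - 2 ^ j) := by
  rcases le_or_gt d n with h | h
  · have e : NsubSurj n d ≃ {s : Fin d → NsubVec n // LinearIndependent (ZMod 2) s} :=
      (LinearMap.toMatrix' (R := ZMod 2) (m := Fin d) (n := Fin n)).toEquiv.subtypeEquiv
        (fun f => nsub_surj_iff n d f)
    rw [Nat.card_congr e, card_linearIndependent (by simpa using h), Finset.prod_range]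
    push_cast
    refine Finset.prod_congr rfl fun j _ => ?_
    rw [Nat.cast_sub]
    · simp
    · refine Nat.pow_le_pow_right (by simp) ?_
      have := j.2
      simp
      omega
  · rw [Finset.prod_eq_zero (Finset.mem_range.2 h) (sub_self _)]
    have : IsEmpty (NsubSurj n d) := ⟨fun f => by
      have := LinearMap.finrank_le_finrank_of_surjective (f := f.1) f.2
      simp at this
      omega⟩
    simp

abbrev NsubGood (n m i : ℕ) := {V : Submodule (ZMod 2) (NsubVec n × NsubVec m) //
    Module.finrank (ZMod 2) ↥V = i ∧
    V.map (LinearMap.fst (ZMod 2) (NsubVec n) (NsubVec m)) = ⊤ ∧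
    V.map (LinearMap.snd (ZMod 2) (NsubVec n) (NsubVec m)) = ⊤}

lemma nsub_card_equiv (n m i d : ℕ) (h : d + i = n + m) (V : NsubGood n m i) :
    Nat.card (((NsubVec n × NsubVec m) ⧸ V.1) ≃ₗ[ZMod 2] NsubVec d) = Nat.card (NsubSurj d d) := by
  have hr : Module.finrank (ZMod 2) ((NsubVec n × NsubVec m) ⧸ V.1)
      = Module.finrank (ZMod 2) (NsubVec d) := by
    have := Submodule.finrank_quotient_add_finrank V.1
    rw [V.2.1] at this
    simp at this ⊢
    omega
  let e0 := LinearEquiv.ofFinrankEq _ _ hr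
  refine Nat.card_eq_of_bijective
    (fun e => (⟨(e0.symm.trans e).toLinearMap, (e0.symm.trans e).surjective⟩ : NsubSurj d d)) ⟨?_, ?_⟩
  · intro e e' hh
    ext1 x
    have := LinearMap.congr_fun (congrArg Subtype.val hh) (e0 x)
    simpa using this
  · rintro ⟨f, hf⟩
    have hi : Function.Injective f := LinearMap.injective_iff_surjective.2 hf
    refine ⟨e0.trans (LinearEquiv.ofBijective f ⟨hi, hf⟩), ?_⟩
    refine Subtype.ext (LinearMap.ext fun x => ?_)
    change f (e0 (e0.symm x)) = f x
    simp

lemma nsub_surj_left (n m i d : ℕ) (V : NsubGood n m i)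
    (e : ((NsubVec n × NsubVec m) ⧸ V.1) ≃ₗ[ZMod 2] NsubVec d) :
    Function.Surjective ((e.toLinearMap ∘ₗ V.1.mkQ) ∘ₗ LinearMap.inl _ _ _) := by
  intro z
  obtain ⟨q, rfl⟩ := e.surjective z
  obtain ⟨⟨x, y⟩, rfl⟩ := V.1.mkQ_surjective q
  have hy : y ∈ V.1.map (LinearMap.snd (ZMod 2) (NsubVec n) (NsubVec m)) := by
    rw [V.2.2.2]; trivial
  obtain ⟨⟨x', y'⟩, hv, hy'⟩ := hy
  simp only [LinearMap.snd_apply] at hy'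
  subst hy'
  refine ⟨x - x', ?_⟩
  simp only [LinearMap.comp_apply, LinearEquiv.coe_coe, Submodule.mkQ_apply]
  congr 1
  rw [Submodule.Quotient.eq]
  simpa using V.1.neg_mem hv

lemma nsub_surj_right (n m i d : ℕ) (V : NsubGood n m i)
    (e : ((NsubVec n × NsubVec m) ⧸ V.1) ≃ₗ[ZMod 2] NsubVec d) :
    Function.Surjective ((e.toLinearMap ∘ₗ V.1.mkQ) ∘ₗ LinearMap.inr _ _ _) := by
  intro z
  obtain ⟨q, rfl⟩ := e.surjective z
  obtain ⟨⟨x, y⟩, rfl⟩ := V.1.mkQ_surjective q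
  have hy : x ∈ V.1.map (LinearMap.fst (ZMod 2) (NsubVec n) (NsubVec m)) := by
    rw [V.2.2.1]; trivial
  obtain ⟨⟨x', y'⟩, hv, hy'⟩ := hy
  simp only [LinearMap.fst_apply] at hy'
  subst hy'
  refine ⟨y - y', ?_⟩
  simp only [LinearMap.comp_apply, LinearEquiv.coe_coe, Submodule.mkQ_apply]
  congr 1
  rw [Submodule.Quotient.eq]
  simpa using V.1.neg_mem hv

def nsubPhi (n m i d : ℕ)
    (p : Σ V : NsubGood n m i, (((NsubVec n × NsubVec m) ⧸ V.1) ≃ₗ[ZMod 2] NsubVec d)) :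
    NsubSurj n d × NsubSurj m d :=
  (⟨_, nsub_surj_left n m i d p.1 p.2⟩, ⟨_, nsub_surj_right n m i d p.1 p.2⟩)

lemma nsubPhi_bij (n m i d : ℕ) (h : d + i = n + m) : Function.Bijective (nsubPhi n m i d) := by
  constructor
  · rintro ⟨⟨V, hV⟩, e⟩ ⟨⟨V', hV'⟩, e'⟩ hh
    have h1 := congrArg (fun t => t.1.1) hh
    have h2 := congrArg (fun t => t.2.1) hh
    simp only [nsubPhi] at h1 h2
    have h3 : e.toLinearMap ∘ₗ V.mkQ = e'.toLinearMap ∘ₗ V'.mkQ := LinearMap.prod_ext h1 h2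
    have h4 : V = V' := by
      have := congrArg LinearMap.ker h3
      simpa [LinearMap.ker_comp] using this
    subst h4
    congr 1
    ext1 q
    obtain ⟨x, rfl⟩ := V.mkQ_surjective q
    exact LinearMap.congr_fun h3 x
  · rintro ⟨⟨f, hf⟩, ⟨g, hg⟩⟩
    have hs : Function.Surjective (f.coprod g) := by
      intro z
      obtain ⟨x, rfl⟩ := hf z
      exact ⟨(x, 0), by simp⟩
    refine ⟨⟨⟨LinearMap.ker (f.coprod g), ?_, ?_, ?_⟩,
      (f.coprod g).quotKerEquivOfSurjective hs⟩, ?_⟩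
    · have := LinearMap.finrank_range_add_finrank_ker (f.coprod g)
      rw [LinearMap.range_eq_top.2 hs] at this
      simp at this
      omega
    · rw [eq_top_iff]
      intro x _
      obtain ⟨y, hy⟩ := hg (- f x)
      exact ⟨(x, y), by simp [hy], rfl⟩
    · rw [eq_top_iff]
      intro y _
      obtain ⟨x, hx⟩ := hf (- g y)
      exact ⟨(x, y), by simp [hx], rfl⟩
    · refine Prod.ext (Subtype.ext (LinearMap.ext fun x => ?_))
        (Subtype.ext (LinearMap.ext fun x => ?_))
      · change f.coprod g (x, 0) = f x
        simp
      · change f.coprod g (0, x) = g x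
        simp

lemma nsub_main (n m i d : ℕ) (h : d + i = n + m) :
    Nsub n m i * Nat.card (NsubSurj d d) = Nat.card (NsubSurj n d) * Nat.card (NsubSurj m d) := by
  classical
  rw [← Nat.card_prod, ← Nat.card_eq_of_bijective _ (nsubPhi_bij n m i d h)]
  have : Fintype (NsubGood n m i) := Fintype.ofFinite _
  have (V : NsubGood n m i) :
      Finite (((NsubVec n × NsubVec m) ⧸ V.1) ≃ₗ[ZMod 2] NsubVec d) :=
    Finite.of_injective (fun e => (e : _ → _)) DFunLike.coe_injective
  rw [Nat.card_sigma, Finset.sum_congr rfl (fun V _ => nsub_card_equiv n m i d h V),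
    Finset.sum_const, Finset.card_univ, ← Nat.card_eq_fintype_card, smul_eq_mul]
  rfl

lemma nsub_formula (n m i : ℕ) (h : i ≤ n + m) :
    (Nsub n m i : ℤ) * ∏ j ∈ Finset.range (n + m - i), ((2 : ℤ) ^ (n + m - i) - 2 ^ j) =
        ∏ j ∈ Finset.range (n + m - i), (((2 : ℤ) ^ n - 2 ^ j) * ((2 : ℤ) ^ m - 2 ^ j)) := by
  rw [Finset.prod_mul_distrib, ← nsub_card_surj, ← nsub_card_surj, ← nsub_card_surj]
  exact_mod_cast nsub_main n m i (n + m - i) (by omega)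

theorem Nsub_count_formula (n m i : ℕ) :
    (i ≤ n + m →
      (Nsub n m i : ℤ) * ∏ j ∈ Finset.range (n + m - i), ((2 : ℤ) ^ (n + m - i) - 2 ^ j) =
        ∏ j ∈ Finset.range (n + m - i), (((2 : ℤ) ^ n - 2 ^ j) * ((2 : ℤ) ^ m - 2 ^ j))) ∧
    Nsub n m (n + m) = 1 ∧
    (n + m < i → Nsub n m i = 0) ∧
    ((n > i ∨ m > i) → i < n + m → Nsub n m i = 0) := by
  refine ⟨nsub_formula n m i, ?_, ?_, ?_⟩
  · have := nsub_formula n m (n + m) le_rfl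
    simpa using this
  · intro h
    have : IsEmpty (NsubGood n m i) := ⟨fun V => by
      have h1 := Submodule.finrank_le V.1
      rw [V.2.1] at h1
      simp at h1
      omega⟩
    exact Nat.card_of_isEmpty (α := NsubGood n m i)
  · intro h _
    have : IsEmpty (NsubGood n m i) := ⟨fun V => by
      have h1 := Submodule.finrank_map_le (LinearMap.fst (ZMod 2) (NsubVec n) (NsubVec m)) V.1
      have h2 := Submodule.finrank_map_le (LinearMap.snd (ZMod 2) (NsubVec n) (NsubVec m)) V.1
      rw [V.2.1, V.2.2.1] at h1
      rw [V.2.1, V.2.2.2] at h2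
      simp at h1 h2
      omega⟩
    exact Nat.card_of_isEmpty (α := NsubGood n m i)
end

section
/- For all nonnegative integers n and m, the alternating sum identity Σ_{i=0}^{n+m} (−1)^i · 2^{i(i−1)/2} · N(n,m;i) = (−1)^{n+m} · 2^{n(n−1)/2 + m(m−1)/2} holds in ℤ. -/
open scoped BigOperators

namespace NsubProof

open Classical in
noncomputable instance subFintype {E : Type*} [AddCommGroup E] [Module (ZMod 2) E] [Finite E] :
    Fintype (Submodule (ZMod 2) E) := Fintype.ofFinite _

/-- The Moebius weight attached to a dimension. -/
def w (d : ℕ) : ℤ := (-1 : ℤ) ^ d * 2 ^ (d * (d - 1) / 2)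

/-- The Moebius weight of a subspace. -/
noncomputable def mu {E : Type*} [AddCommGroup E] [Module (ZMod 2) E]
    (V : Submodule (ZMod 2) E) : ℤ := w (Module.finrank (ZMod 2) V)

lemma w_succ (d : ℕ) : w (d + 1) = - (2 ^ d * w d) := by
  unfold w
  have : (d + 1) * (d + 1 - 1) / 2 = d + d * (d - 1) / 2 := by
    rw [← Finset.sum_range_id, ← Finset.sum_range_id, Finset.sum_range_succ, add_comm]
  rw [this, pow_add, pow_add]
  ring

section
variable {E : Type*} [AddCommGroup E] [Module (ZMod 2) E] [Finite E]

lemma zmod2_eq_one {c : ZMod 2} (h : c ≠ 0) : c = 1 := by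
  revert h; revert c; decide

lemma exists_functional {V : Submodule (ZMod 2) E} {x : E} (hx : x ∉ V) :
    ∃ f : E →ₗ[ZMod 2] ZMod 2, f x = 1 ∧ ∀ v ∈ V, f v = 0 := by
  obtain ⟨f, hf, hV⟩ := Submodule.exists_le_ker_of_notMem hx
  exact ⟨f, zmod2_eq_one hf, fun v hv => hV hv⟩

lemma card_functional (d : ℕ) (hd : Module.finrank (ZMod 2) E = d + 1) {x : E} (hx : x ≠ 0) :
    Nat.card {f : E →ₗ[ZMod 2] ZMod 2 // f x = 1} = 2 ^ d := by
  obtain ⟨f0, hf0, -⟩ := exists_functional (V := (⊥ : Submodule (ZMod 2) E)) (x := x) (by simpa using hx)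
  let ev : (E →ₗ[ZMod 2] ZMod 2) →ₗ[ZMod 2] ZMod 2 := LinearMap.applyₗ x
  have hev : ∀ f, ev f = f x := fun f => rfl
  have hs : LinearMap.range ev = ⊤ := by
    rw [LinearMap.range_eq_top]
    intro c
    exact ⟨c • f0, by simp [hev, hf0]⟩
  have h1 := LinearMap.finrank_range_add_finrank_ker ev
  rw [hs, finrank_top, Module.finrank_self, Module.finrank_linearMap, Module.finrank_self, hd] at h1
  have h2 : Module.finrank (ZMod 2) (LinearMap.ker ev) = d := by omega
  have e : {f : E →ₗ[ZMod 2] ZMod 2 // f x = 1} ≃ LinearMap.ker ev :=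
    { toFun := fun f => ⟨f.1 - f0, by simp [hev, f.2, hf0]⟩
      invFun := fun f => ⟨f.1 + f0, by
        have := f.2
        rw [LinearMap.mem_ker, hev] at this
        simp [this, hf0]⟩
      left_inv := fun f => by simp
      right_inv := fun f => by simp }
  rw [Nat.card_congr e, Module.natCard_eq_pow_finrank (K := ZMod 2), h2]
  simp

lemma card_compl (U : Submodule (ZMod 2) E) (d : ℕ) (hd : Module.finrank (ZMod 2) U = d + 1)
    {x : E} (hx : x ≠ 0) (hxU : x ∈ U) :
    Nat.card {V : Submodule (ZMod 2) E // V ⊔ Submodule.span (ZMod 2) {x} = U ∧ x ∉ V} = 2 ^ d := by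
  have hx' : (⟨x, hxU⟩ : U) ≠ 0 := by simpa [Subtype.ext_iff] using hx
  rw [← card_functional d hd hx']
  symm
  refine Nat.card_congr (Equiv.ofBijective
    (fun f => ⟨(LinearMap.ker f.1).map U.subtype, ?_, ?_⟩) ⟨?_, ?_⟩)
  · apply le_antisymm
    · refine sup_le (Submodule.map_subtype_le _ _) ?_
      simpa using hxU
    · intro u hu
      rw [Submodule.mem_sup]
      refine ⟨u - f.1 ⟨u, hu⟩ • x, ?_, f.1 ⟨u, hu⟩ • x,
        Submodule.smul_mem _ _ (Submodule.mem_span_singleton_self x), by simp⟩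
      refine ⟨⟨u, hu⟩ - f.1 ⟨u, hu⟩ • ⟨x, hxU⟩, ?_, by simp⟩
      rw [SetLike.mem_coe, LinearMap.mem_ker, map_sub, map_smul, f.2]
      simp
  · rintro ⟨y, hy, hyx⟩
    have : y = ⟨x, hxU⟩ := Subtype.ext hyx
    subst this
    have h1 := f.2
    have h2 : f.1 ⟨x, hxU⟩ = 0 := hy
    rw [h1] at h2
    exact one_ne_zero h2
  · intro f g hfg
    have hk : LinearMap.ker f.1 = LinearMap.ker g.1 :=
      Submodule.map_injective_of_injective U.injective_subtype (congrArg Subtype.val hfg)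
    apply Subtype.ext
    ext u
    have : u - f.1 u • (⟨x, hxU⟩ : U) ∈ LinearMap.ker f.1 := by
      rw [LinearMap.mem_ker, map_sub, map_smul, f.2]
      simp
    rw [hk, LinearMap.mem_ker, map_sub, map_smul, g.2, sub_eq_zero] at this
    simpa using this.symm
  · rintro ⟨V, hV, hxV⟩
    obtain ⟨f, hfx, hfV⟩ := exists_functional hxV
    refine ⟨⟨f.comp U.subtype, by simpa using hfx⟩, ?_⟩
    apply Subtype.ext
    ext u
    constructor
    · rintro ⟨⟨y, hyU⟩, hy, rfl⟩
      have hy' : f y = 0 := hy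
      rw [← hV, Submodule.mem_sup] at hyU
      obtain ⟨v, hv, z, hz, rfl⟩ := hyU
      obtain ⟨c, rfl⟩ := Submodule.mem_span_singleton.1 hz
      have : c = 0 := by simpa [hfV v hv, hfx] using hy'
      simpa [this] using hv
    · intro hu
      have huU : u ∈ U := hV ▸ Submodule.mem_sup_left hu
      exact ⟨⟨u, huU⟩, hfV u hu, rfl⟩

lemma finrank_compl {U V : Submodule (ZMod 2) E} {x : E} (hx : x ≠ 0)
    (hV : V ⊔ Submodule.span (ZMod 2) {x} = U) (hxV : x ∉ V) :
    Module.finrank (ZMod 2) U = Module.finrank (ZMod 2) V + 1 := by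
  have h := Submodule.finrank_sup_add_finrank_inf_eq V (Submodule.span (ZMod 2) {x})
  have h0 : V ⊓ Submodule.span (ZMod 2) {x} = ⊥ :=
    ((Submodule.disjoint_span_singleton' hx).2 hxV).eq_bot
  rw [hV, h0, finrank_bot, finrank_span_singleton hx] at h
  simpa using h

open Classical in
lemma sum_fiber (U : Submodule (ZMod 2) E) {x : E} (hx : x ≠ 0) (hxU : x ∈ U) :
    ∑ V : Submodule (ZMod 2) E with V ⊔ Submodule.span (ZMod 2) {x} = U, mu V = 0 := by
  have hpos : 0 < Module.finrank (ZMod 2) U := by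
    rw [Nat.pos_iff_ne_zero, Ne, Submodule.finrank_eq_zero]
    rintro rfl
    exact hx (by simpa using hxU)
  obtain ⟨d, hd⟩ : ∃ d, Module.finrank (ZMod 2) U = d + 1 :=
    ⟨Module.finrank (ZMod 2) U - 1, by omega⟩
  have hins : (Finset.univ.filter
        fun V : Submodule (ZMod 2) E => V ⊔ Submodule.span (ZMod 2) {x} = U) =
      insert U (Finset.univ.filter
        fun V : Submodule (ZMod 2) E => V ⊔ Submodule.span (ZMod 2) {x} = U ∧ x ∉ V) := by
    ext V
    simp only [Finset.mem_filter, Finset.mem_univ, true_and, Finset.mem_insert]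
    constructor
    · intro h
      by_cases hV : x ∈ V
      · left
        rw [← h, left_eq_sup]
        simpa using hV
      · exact Or.inr ⟨h, hV⟩
    · rintro (rfl | h)
      · rw [sup_eq_left]; simpa using hxU
      · exact h.1
  rw [hins, Finset.sum_insert (by simp [hxU])]
  have hc : ∀ V ∈ (Finset.univ.filter
        fun V : Submodule (ZMod 2) E => V ⊔ Submodule.span (ZMod 2) {x} = U ∧ x ∉ V),
      mu V = w d := by
    intro V hV
    simp only [Finset.mem_filter, Finset.mem_univ, true_and] at hV
    have := finrank_compl hx hV.1 hV.2
    unfold mu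
    congr 1
    omega
  rw [Finset.sum_congr rfl hc, Finset.sum_const]
  have hcard := card_compl U d hd hx hxU
  rw [Nat.card_eq_fintype_card, Fintype.card_subtype] at hcard
  rw [hcard, mu, hd, w_succ]
  simp

open Classical in
lemma sum_mu (W : Submodule (ZMod 2) E) :
    ∑ V : Submodule (ZMod 2) E with V ≤ W, mu V = if W = ⊥ then 1 else 0 := by
  split_ifs with hW
  · subst hW
    have : (Finset.univ.filter fun V : Submodule (ZMod 2) E => V ≤ ⊥) = {⊥} := by
      ext V; simp
    rw [this, Finset.sum_singleton, mu, finrank_bot]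
    simp [w]
  · obtain ⟨x, hxW, hx⟩ := Submodule.exists_mem_ne_zero_of_ne_bot hW
    rw [← Finset.sum_fiberwise _ (fun V => V ⊔ Submodule.span (ZMod 2) {x})]
    apply Finset.sum_eq_zero
    intro U _
    rw [Finset.filter_filter]
    have hxs : x ∈ Submodule.span (ZMod 2) {x} := Submodule.mem_span_singleton_self x
    by_cases hU : U ≤ W ∧ x ∈ U
    · rw [← sum_fiber U hx hU.2]
      congr 1
      ext V
      simp only [Finset.mem_filter, Finset.mem_univ, true_and]
      exact ⟨fun h => h.2, fun h => ⟨(h ▸ le_sup_left : V ≤ U).trans hU.1, h⟩⟩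
    · rw [Finset.filter_false_of_mem, Finset.sum_empty]
      rintro V - ⟨h1, h2⟩
      apply hU
      rw [← h2]
      refine ⟨sup_le h1 (by simpa using hxW), Submodule.mem_sup_right hxs⟩

end

section
variable {A B : Type*} [AddCommGroup A] [Module (ZMod 2) A] [Finite A]
  [AddCommGroup B] [Module (ZMod 2) B] [Finite B]

/-- The pair of projections. -/
def pr (V : Submodule (ZMod 2) (A × B)) : Submodule (ZMod 2) A × Submodule (ZMod 2) B :=
  (V.map (LinearMap.fst (ZMod 2) A B), V.map (LinearMap.snd (ZMod 2) A B))

open Classical in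
lemma sum_pr (p : Submodule (ZMod 2) A × Submodule (ZMod 2) B) :
    ∑ V : Submodule (ZMod 2) (A × B) with pr V = p, mu V = mu p.1 * mu p.2 := by
  induction p using WellFoundedLT.induction with
  | ind p ih =>
  have h1 : ∑ q : Submodule (ZMod 2) A × Submodule (ZMod 2) B with q ≤ p,
      ∑ V : Submodule (ZMod 2) (A × B) with pr V = q, mu V = if p = ⊥ then 1 else 0 := by
    have := sum_mu (p.1.prod p.2)
    rw [← Finset.sum_fiberwise_of_maps_to (t := Finset.univ.filter fun q => q ≤ p) (g := pr)] at this
    · convert this using 1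
      · apply Finset.sum_congr rfl
        intro q hq
        simp only [Finset.mem_filter, Finset.mem_univ, true_and] at hq
        rw [Finset.filter_filter]
        congr 1
        ext V
        simp only [Finset.mem_filter, Finset.mem_univ, true_and]
        refine ⟨fun h => ⟨?_, h⟩, fun h => h.2⟩
        rw [Submodule.le_prod_iff]
        subst h
        exact hq
      · simp [Submodule.prod_eq_bot_iff, Prod.ext_iff]
    · intro V hV
      simp only [Finset.mem_filter, Finset.mem_univ, true_and] at hV ⊢
      rw [Submodule.le_prod_iff] at hV
      exact hV
  have h2 : ∑ q : Submodule (ZMod 2) A × Submodule (ZMod 2) B with q ≤ p,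
      mu q.1 * mu q.2 = if p = ⊥ then 1 else 0 := by
    have e : (Finset.univ.filter fun q : Submodule (ZMod 2) A × Submodule (ZMod 2) B => q ≤ p) =
        (Finset.univ.filter fun q => q ≤ p.1) ×ˢ (Finset.univ.filter fun q => q ≤ p.2) := by
      ext q
      simp [Prod.le_def]
    rw [e, Finset.sum_product, ← Finset.sum_mul_sum, sum_mu, sum_mu]
    by_cases ha : p.1 = ⊥ <;> by_cases hb : p.2 = ⊥ <;> simp [ha, hb, Prod.ext_iff]
  have hp : p ∈ (Finset.univ.filter
      fun q : Submodule (ZMod 2) A × Submodule (ZMod 2) B => q ≤ p) := by simp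
  rw [← h2, ← Finset.add_sum_erase _ _ hp, ← Finset.add_sum_erase _ _ hp] at h1
  rw [Finset.sum_congr rfl (fun q hq => ih q ?_)] at h1
  · exact add_right_cancel h1
  · simp only [Finset.mem_erase, Finset.mem_filter, Finset.mem_univ, true_and] at hq
    exact lt_of_le_of_ne hq.2 hq.1

end

end NsubProof

open NsubProof

theorem Nsub_alternating_sum (n m : ℕ) :
    ∑ i ∈ Finset.range (n + m + 1),
        (-1 : ℤ) ^ i * 2 ^ (i * (i - 1) / 2) * (Nsub n m i : ℤ) =
      (-1 : ℤ) ^ (n + m) * 2 ^ (n * (n - 1) / 2 + m * (m - 1) / 2) := by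
  classical
  have h := sum_pr (A := Fin n → ZMod 2) (B := Fin m → ZMod 2) (⊤, ⊤)
  have hr : mu (⊤ : Submodule (ZMod 2) (Fin n → ZMod 2)) *
      mu (⊤ : Submodule (ZMod 2) (Fin m → ZMod 2)) =
      (-1 : ℤ) ^ (n + m) * 2 ^ (n * (n - 1) / 2 + m * (m - 1) / 2) := by
    simp only [mu, finrank_top, Module.finrank_fin_fun, w, pow_add]
    ring
  rw [← hr, ← h, ← Finset.sum_fiberwise_of_maps_to (t := Finset.range (n + m + 1))
    (g := fun V : Submodule (ZMod 2) ((Fin n → ZMod 2) × (Fin m → ZMod 2)) =>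
      Module.finrank (ZMod 2) V)]
  · apply Finset.sum_congr rfl
    intro i _
    rw [Finset.filter_filter, Finset.sum_congr rfl (g := fun _ => w i), Finset.sum_const, Nsub,
      Nat.card_eq_fintype_card, Fintype.card_subtype, nsmul_eq_mul, mul_comm]
    · unfold w
      congr 3
      ext V
      simp [pr, Prod.ext_iff]
      tauto
    · intro V hV
      simp only [Finset.mem_filter, Finset.mem_univ, true_and] at hV
      rw [mu, hV.2]
  · intro V _
    have := Submodule.finrank_le V
    simp only [Module.finrank_prod, Module.finrank_fin_fun] at this
    simp only [Finset.mem_range]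
    omega
end

section
/- For all nonnegative integers n, m, i, the counting functions satisfy the recursion N(n,m+1;i+1) = N(n,m;i) + (2^{i+1} − 2^m) · N(n,m;i+1), an identity in ℤ (when m > i+1 the second summand is zero since then N(n,m;i+1) = 0). -/
open scoped BigOperators

namespace NsubAux

variable {X Y : Type} [AddCommGroup X] [AddCommGroup Y] [Module (ZMod 2) X] [Module (ZMod 2) Y]

/-- The conditions on `U ⊆ X × Y`. -/
def Base (k : ℕ) (U : Submodule (ZMod 2) (X × Y)) : Prop :=
  Module.finrank (ZMod 2) U = k ∧ (∀ x, ∃ v ∈ U, v.1 = x) ∧ (∀ y, ∃ v ∈ U, v.2 = y)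

/-- The conditions on `V ⊆ (X × Y) × 𝔽₂`. -/
def Good (k : ℕ) (V : Submodule (ZMod 2) ((X × Y) × ZMod 2)) : Prop :=
  Module.finrank (ZMod 2) V = k ∧ (∀ x, ∃ v ∈ V, v.1.1 = x) ∧
    (∀ y t, ∃ v ∈ V, v.1.2 = y ∧ v.2 = t)

lemma map_top_iff {M N : Type} [AddCommGroup M] [AddCommGroup N] [Module (ZMod 2) M]
    [Module (ZMod 2) N] (f : M →ₗ[ZMod 2] N) (V : Submodule (ZMod 2) M) :
    V.map f = ⊤ ↔ ∀ x, ∃ v ∈ V, f v = x := by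
  rw [Submodule.eq_top_iff']
  simp [Submodule.mem_map]

lemma Nsub_eq_base (n m k : ℕ) :
    Nsub n m k = Nat.card {U : Submodule (ZMod 2) ((Fin n → ZMod 2) × (Fin m → ZMod 2)) //
      Base k U} := by
  unfold Nsub Base
  simp only [map_top_iff, LinearMap.fst_apply, LinearMap.snd_apply]

def eqv (n m : ℕ) : ((((Fin n → ZMod 2) × (Fin m → ZMod 2)) × ZMod 2) ≃ₗ[ZMod 2]
    ((Fin n → ZMod 2) × (Fin (m + 1) → ZMod 2))) :=
  (LinearEquiv.prodAssoc (ZMod 2) _ _ _).trans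
    ((LinearEquiv.refl (ZMod 2) _).prodCongr
      ((LinearEquiv.prodComm (ZMod 2) _ _).trans
        (Fin.consLinearEquiv (ZMod 2) (fun _ : Fin (m + 1) => ZMod 2))))

lemma eqv_apply (n m : ℕ) (v : ((Fin n → ZMod 2) × (Fin m → ZMod 2)) × ZMod 2) :
    eqv n m v = (v.1.1, Fin.cons v.2 v.1.2) := rfl

lemma Nsub_eq_good (n m k : ℕ) :
    Nsub n (m + 1) k = Nat.card {V : Submodule (ZMod 2)
      (((Fin n → ZMod 2) × (Fin m → ZMod 2)) × ZMod 2) // Good k V} := by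
  rw [Nsub_eq_base]
  symm
  refine Nat.card_congr (Equiv.subtypeEquiv
    (Submodule.orderIsoMapComap (eqv n m)).toEquiv fun V => ?_)
  have h1 : (Submodule.orderIsoMapComap (eqv n m)).toEquiv V =
      V.map (eqv n m : _ →ₗ[ZMod 2] _) := rfl
  rw [h1]
  unfold Good Base
  rw [LinearEquiv.finrank_map_eq]
  refine and_congr_right fun _ => and_congr ?_ ?_
  · refine forall_congr' fun x => ?_
    simp only [Submodule.mem_map, LinearEquiv.coe_coe, eqv_apply]
    constructor
    · rintro ⟨v, hv, rfl⟩
      exact ⟨_, ⟨v, hv, rfl⟩, rfl⟩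
    · rintro ⟨_, ⟨v, hv, rfl⟩, rfl⟩
      exact ⟨v, hv, rfl⟩
  · simp only [Submodule.mem_map, LinearEquiv.coe_coe, eqv_apply]
    constructor
    · intro h y
      obtain ⟨v, hv, h1, h2⟩ := h (Fin.tail y) (y 0)
      exact ⟨_, ⟨v, hv, rfl⟩, by simp [h1, h2]⟩
    · intro h y t
      obtain ⟨_, ⟨v, hv, rfl⟩, h1⟩ := h (Fin.cons t y)
      obtain ⟨h2, h3⟩ := Fin.cons_inj (α := fun _ : Fin (m + 1) => ZMod 2).1 h1
      exact ⟨v, hv, h3, h2⟩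

variable [Finite X] [Finite Y]

set_option linter.unusedSectionVars false

lemma finrank_comap (U : Submodule (ZMod 2) (X × Y)) :
    Module.finrank (ZMod 2) (U.comap (LinearMap.fst (ZMod 2) (X × Y) (ZMod 2))) =
      Module.finrank (ZMod 2) U + 1 := by
  have e : (U.comap (LinearMap.fst (ZMod 2) (X × Y) (ZMod 2))) ≃ₗ[ZMod 2] U × ZMod 2 :=
    { toFun := fun v => (⟨v.1.1, v.2⟩, v.1.2)
      invFun := fun w => ⟨(w.1.1, w.2), w.1.2⟩
      map_add' := fun _ _ => rfl
      map_smul' := fun _ _ => rfl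
      left_inv := fun _ => rfl
      right_inv := fun _ => rfl }
  rw [e.finrank_eq, Module.finrank_prod, Module.finrank_self]

lemma cardA (k : ℕ) :
    Nat.card {V : Submodule (ZMod 2) ((X × Y) × ZMod 2) // Good (k + 1) V ∧ ((0, 1) : (X × Y) × ZMod 2) ∈ V} =
      Nat.card {U : Submodule (ZMod 2) (X × Y) // Base k U} := by
  symm
  refine Nat.card_congr (Equiv.ofBijective (fun U => ⟨U.1.comap (LinearMap.fst (ZMod 2) (X × Y) (ZMod 2)), ?_⟩) ⟨?_, ?_⟩)
  · obtain ⟨U, h0, h1, h2⟩ := U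
    refine ⟨⟨by rw [finrank_comap, h0], fun x => ?_, fun y t => ?_⟩, by simp⟩
    · obtain ⟨v, hv, rfl⟩ := h1 x
      exact ⟨(v, 0), hv, rfl⟩
    · obtain ⟨v, hv, rfl⟩ := h2 y
      exact ⟨(v, t), hv, rfl, rfl⟩
  · rintro ⟨U, hU⟩ ⟨W, hW⟩ h
    have h : U.comap (LinearMap.fst (ZMod 2) (X × Y) (ZMod 2)) = W.comap (LinearMap.fst (ZMod 2) (X × Y) (ZMod 2)) := congrArg Subtype.val h
    exact Subtype.ext (Submodule.comap_injective_of_surjective LinearMap.fst_surjective h)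
  · rintro ⟨V, ⟨h0, h1, h2⟩, h3⟩
    have key : (V.map (LinearMap.fst (ZMod 2) (X × Y) (ZMod 2))).comap
        (LinearMap.fst (ZMod 2) (X × Y) (ZMod 2)) = V := by
      rw [Submodule.comap_map_eq, sup_eq_left]
      rintro ⟨a, t⟩ h
      have ha : a = 0 := h
      subst ha
      have := V.smul_mem t h3
      simpa using this
    refine ⟨⟨V.map (LinearMap.fst (ZMod 2) (X × Y) (ZMod 2)), ?_, fun x => ?_, fun y => ?_⟩,
      Subtype.ext key⟩
    · have := finrank_comap (V.map (LinearMap.fst (ZMod 2) (X × Y) (ZMod 2)))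
      rw [key, h0] at this
      omega
    · obtain ⟨v, hv, rfl⟩ := h1 x
      exact ⟨v.1, ⟨v, hv, rfl⟩, rfl⟩
    · obtain ⟨v, hv, rfl, -⟩ := h2 y 0
      exact ⟨v.1, ⟨v, hv, rfl⟩, rfl⟩

/-- The projection `U → Y`. -/
def pr (U : Submodule (ZMod 2) (X × Y)) : U →ₗ[ZMod 2] Y :=
  (LinearMap.snd (ZMod 2) X Y).comp U.subtype

lemma pr_surj {k : ℕ} {U : Submodule (ZMod 2) (X × Y)} (h : Base k U) :
    Function.Surjective (pr U) := by
  intro y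
  obtain ⟨v, hv, rfl⟩ := h.2.2 y
  exact ⟨⟨v, hv⟩, rfl⟩

lemma finrank_graph (p : (X × Y) →ₗ.[ZMod 2] ZMod 2) :
    Module.finrank (ZMod 2) p.graph = Module.finrank (ZMod 2) p.domain := by
  have hinj : Function.Injective (p.domain.subtype.prod p.toFun) := by
    intro a b h
    exact Subtype.ext (congrArg Prod.fst h)
  have h : p.graph = LinearMap.range (p.domain.subtype.prod p.toFun) := by
    ext v
    rw [LinearPMap.mem_graph_iff', LinearMap.mem_range]
    rfl
  rw [h, LinearMap.finrank_range_of_inj hinj]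

lemma surj_iff (p : (X × Y) →ₗ.[ZMod 2] ZMod 2) (hs : Function.Surjective (pr p.domain)) :
    (∀ y t, ∃ v ∈ p.graph, v.1.2 = y ∧ v.2 = t) ↔
      p.toFun ∉ LinearMap.range (pr p.domain).dualMap := by
  rw [LinearMap.range_dualMap_eq_dualAnnihilator_ker, Submodule.mem_dualAnnihilator]
  constructor
  · intro h h'
    obtain ⟨v, hv, h1, h2⟩ := h 0 1
    obtain ⟨u, rfl⟩ := (LinearPMap.mem_graph_iff' p).1 hv
    have h3 : p.toFun u = 0 := h' u h1
    have h4 : p.toFun u = 1 := h2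
    rw [h3] at h4
    exact zero_ne_one h4
  · intro h y t
    push Not at h
    obtain ⟨u, hu, hne⟩ := h
    have h1 : p.toFun u = 1 := by
      generalize p.toFun u = a at hne
      revert a
      decide
    obtain ⟨w, rfl⟩ := hs y
    refine ⟨_, p.mem_graph (w + (t - p.toFun w) • u), ?_, ?_⟩
    · change pr p.domain (w + (t - p.toFun w) • u) = pr p.domain w
      rw [map_add, map_smul, LinearMap.mem_ker.1 hu, smul_zero, add_zero]
    · change p.toFun (w + (t - p.toFun w) • u) = t
      rw [map_add, map_smul, h1, smul_eq_mul, mul_one, add_sub_cancel]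

lemma exists_graph (V : Submodule (ZMod 2) ((X × Y) × ZMod 2))
    (h3 : ((0, 1) : (X × Y) × ZMod 2) ∉ V) :
    ∃ p : (X × Y) →ₗ.[ZMod 2] ZMod 2, p.graph = V := by
  refine ⟨V.toLinearPMap, Submodule.toLinearPMap_graph_eq V ?_⟩
  rintro ⟨a, t⟩ hx ha
  have ha : a = 0 := ha
  subst ha
  by_contra hne
  have hd : ∀ s : ZMod 2, s ≠ 0 → s = 1 := by decide
  have ht : t = 1 := hd t hne
  subst ht
  exact h3 hx

lemma good_graph {k : ℕ} (p : (X × Y) →ₗ.[ZMod 2] ZMod 2) (h : Good k p.graph) :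
    Base k p.domain := by
  obtain ⟨h0, h1, h2⟩ := h
  refine ⟨by rw [← finrank_graph, h0], fun x => ?_, fun y => ?_⟩
  · obtain ⟨v, hv, rfl⟩ := h1 x
    exact ⟨v.1, LinearPMap.mem_domain_of_mem_graph (y := v.2) hv, rfl⟩
  · obtain ⟨v, hv, rfl, -⟩ := h2 y 0
    exact ⟨v.1, LinearPMap.mem_domain_of_mem_graph (y := v.2) hv, rfl⟩

set_option maxHeartbeats 1000000 in
lemma cardB (k : ℕ) :
    Nat.card {V : Submodule (ZMod 2) ((X × Y) × ZMod 2) //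
        Good k V ∧ ((0, 1) : (X × Y) × ZMod 2) ∉ V} =
      Nat.card (Σ U : {U : Submodule (ZMod 2) (X × Y) // Base k U},
        {φ : Module.Dual (ZMod 2) U.1 // φ ∉ LinearMap.range (pr U.1).dualMap}) := by
  symm
  refine Nat.card_congr (Equiv.ofBijective
    (fun q => ⟨(LinearPMap.mk q.1.1 q.2.1 : (X × Y) →ₗ.[ZMod 2] ZMod 2).graph, ?_⟩) ⟨?_, ?_⟩)
  · obtain ⟨⟨U, hU⟩, φ, hφ⟩ := q
    refine ⟨⟨(finrank_graph _).trans hU.1, fun x => ?_,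
      (surj_iff (LinearPMap.mk U φ) (pr_surj hU)).2 hφ⟩, fun h => ?_⟩
    · obtain ⟨v, hv, rfl⟩ := hU.2.1 x
      exact ⟨_, LinearPMap.mem_graph (LinearPMap.mk U φ) ⟨v, hv⟩, rfl⟩
    · exact one_ne_zero (LinearPMap.graph_fst_eq_zero_snd _ h rfl)
  · rintro ⟨⟨U, hU⟩, φ, hφ⟩ ⟨⟨W, hW⟩, ψ, hψ⟩ h
    have h := LinearPMap.eq_of_eq_graph (congrArg Subtype.val h)
    cases h
    rfl
  · rintro ⟨V, ⟨h0, h1, h2⟩, h3⟩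
    obtain ⟨p, hg⟩ := exists_graph V h3
    subst hg
    have hU : Base k p.domain := good_graph p ⟨h0, h1, h2⟩
    exact ⟨⟨⟨p.domain, hU⟩, ⟨p.toFun, (surj_iff p (pr_surj hU)).1 h2⟩⟩, rfl⟩

lemma cardC (k : ℕ) (U : Submodule (ZMod 2) (X × Y)) (hU : Base k U) :
    (Nat.card {φ : Module.Dual (ZMod 2) U // φ ∉ LinearMap.range (pr U).dualMap} : ℤ) =
      2 ^ k - 2 ^ Module.finrank (ZMod 2) Y := by
  classical
  have hfin : Finite (Module.Dual (ZMod 2) U) := Module.finite_of_finite (ZMod 2)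
  have h1 : Nat.card (Module.Dual (ZMod 2) U) = 2 ^ k := by
    rw [Module.natCard_eq_pow_finrank (K := ZMod 2), Subspace.dual_finrank_eq, hU.1, Nat.card_zmod]
  have h2 : Nat.card (LinearMap.range (pr U).dualMap) = 2 ^ Module.finrank (ZMod 2) Y := by
    rw [Module.natCard_eq_pow_finrank (K := ZMod 2), LinearMap.finrank_range_of_inj
      (LinearMap.dualMap_injective_of_surjective (pr_surj hU)), Subspace.dual_finrank_eq,
      Nat.card_zmod]
  have h3 := Nat.card_congr
    (Equiv.sumCompl (fun φ : Module.Dual (ZMod 2) U => φ ∈ LinearMap.range (pr U).dualMap))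
  rw [Nat.card_sum, h1] at h3
  have h4 : Nat.card {φ : Module.Dual (ZMod 2) U // φ ∈ LinearMap.range (pr U).dualMap} =
    2 ^ Module.finrank (ZMod 2) Y := h2
  rw [h4] at h3
  have h5 : ((2 ^ Module.finrank (ZMod 2) Y +
    Nat.card {φ : Module.Dual (ZMod 2) U // φ ∉ LinearMap.range (pr U).dualMap} : ℕ) : ℤ) =
      ((2 ^ k : ℕ) : ℤ) := congrArg _ h3
  push_cast at h5
  linarith

lemma finite_submodule (M : Type) [AddCommGroup M] [Module (ZMod 2) M] [Finite M] :
    Finite (Submodule (ZMod 2) M) :=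
  Finite.of_injective (fun V => (V : Set M)) SetLike.coe_injective

lemma main (k : ℕ) :
    (Nat.card {V : Submodule (ZMod 2) ((X × Y) × ZMod 2) // Good (k + 1) V} : ℤ) =
      Nat.card {U : Submodule (ZMod 2) (X × Y) // Base k U} +
      (2 ^ (k + 1) - 2 ^ Module.finrank (ZMod 2) Y) *
        Nat.card {U : Submodule (ZMod 2) (X × Y) // Base (k + 1) U} := by
  classical
  have := finite_submodule (X × Y)
  have := finite_submodule ((X × Y) × ZMod 2)
  have := Fintype.ofFinite {U : Submodule (ZMod 2) (X × Y) // Base (k + 1) U}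
  have hfin : ∀ U : Submodule (ZMod 2) (X × Y), Finite (Module.Dual (ZMod 2) U) :=
    fun U => Module.finite_of_finite (ZMod 2)
  have h1 := Nat.card_congr (Equiv.sumCompl
    (fun V : {V : Submodule (ZMod 2) ((X × Y) × ZMod 2) // Good (k + 1) V} =>
      ((0, 1) : (X × Y) × ZMod 2) ∈ V.1))
  rw [Nat.card_sum,
    Nat.card_congr (Equiv.subtypeSubtypeEquivSubtypeInter (Good (k + 1))
      (fun V : Submodule (ZMod 2) ((X × Y) × ZMod 2) => ((0, 1) : (X × Y) × ZMod 2) ∈ V)),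
    Nat.card_congr (Equiv.subtypeSubtypeEquivSubtypeInter (Good (k + 1))
      (fun V : Submodule (ZMod 2) ((X × Y) × ZMod 2) => ((0, 1) : (X × Y) × ZMod 2) ∉ V)),
    cardA, cardB, Nat.card_sigma] at h1
  rw [← h1]
  push_cast
  rw [Finset.sum_congr rfl (fun U _ => cardC (k + 1) U.1 U.2), Finset.sum_const, nsmul_eq_mul,
    Finset.card_univ, Nat.card_eq_fintype_card
      (α := {U : Submodule (ZMod 2) (X × Y) // Base (k + 1) U}), mul_comm]

end NsubAux

theorem Nsub_recursion (n m i : ℕ) :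
    (Nsub n (m + 1) (i + 1) : ℤ) =
      (Nsub n m i : ℤ) + ((2 : ℤ) ^ (i + 1) - 2 ^ m) * (Nsub n m (i + 1) : ℤ) := by
  rw [NsubAux.Nsub_eq_good, NsubAux.main, NsubAux.Nsub_eq_base, NsubAux.Nsub_eq_base,
    Module.finrank_fin_fun]
end

section
/- Let n, m, i, a, b be nonnegative integers, let V₁ be an n-dimensional 𝔽₂-linear subspace of 𝔽₂^a, and let V₂ be an m-dimensional 𝔽₂-linear subspace of 𝔽₂^b. Then the number of i-dimensional 𝔽₂-linear subspaces V of 𝔽₂^a ⊕ 𝔽₂^b whose image under the first projection equals V₁ and whose image under the second projection equals V₂ is N(n,m;i); in particular it depends only on n, m and i. -/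
open scoped BigOperators

theorem card_subspaces_with_given_projections (n m i a b : ℕ)
    (V₁ : Submodule (ZMod 2) (Fin a → ZMod 2)) (V₂ : Submodule (ZMod 2) (Fin b → ZMod 2))
    (h₁ : Module.finrank (ZMod 2) ↥V₁ = n) (h₂ : Module.finrank (ZMod 2) ↥V₂ = m) :
    Nat.card {V : Submodule (ZMod 2) ((Fin a → ZMod 2) × (Fin b → ZMod 2)) //
      Module.finrank (ZMod 2) ↥V = i ∧
      V.map (LinearMap.fst (ZMod 2) (Fin a → ZMod 2) (Fin b → ZMod 2)) = V₁ ∧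
      V.map (LinearMap.snd (ZMod 2) (Fin a → ZMod 2) (Fin b → ZMod 2)) = V₂} =
      Nsub n m i := by
  have key : ∀ (n a : ℕ) (U : Submodule (ZMod 2) (Fin a → ZMod 2)),
      Module.finrank (ZMod 2) ↥U = n →
      ∃ f : (Fin n → ZMod 2) →ₗ[ZMod 2] (Fin a → ZMod 2),
        Function.Injective f ∧ LinearMap.range f = U := by
    intro n a U h
    have e : (Fin n → ZMod 2) ≃ₗ[ZMod 2] U :=
      LinearEquiv.ofFinrankEq _ _ (by simp [h])
    refine ⟨U.subtype ∘ₗ e.toLinearMap, ?_, ?_⟩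
    · exact U.injective_subtype.comp e.injective
    · rw [LinearMap.range_comp, LinearEquiv.range, Submodule.map_top, Submodule.range_subtype]
  obtain ⟨f, hf, hfr⟩ := key n a V₁ h₁
  obtain ⟨g, hg, hgr⟩ := key m b V₂ h₂
  have hφ : Function.Injective (f.prodMap g) := by
    rintro ⟨x, y⟩ ⟨x', y'⟩ h
    simp only [LinearMap.prodMap_apply, Prod.mk.injEq] at h
    rw [hf h.1, hg h.2]
  have hfst : ∀ V : Submodule (ZMod 2) ((Fin n → ZMod 2) × (Fin m → ZMod 2)),
      (V.map (f.prodMap g)).map (LinearMap.fst _ _ _) = (V.map (LinearMap.fst _ _ _)).map f := by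
    intro V
    rw [← Submodule.map_comp, ← Submodule.map_comp]
    rfl
  have hsnd : ∀ V : Submodule (ZMod 2) ((Fin n → ZMod 2) × (Fin m → ZMod 2)),
      (V.map (f.prodMap g)).map (LinearMap.snd _ _ _) = (V.map (LinearMap.snd _ _ _)).map g := by
    intro V
    rw [← Submodule.map_comp, ← Submodule.map_comp]
    rfl
  have hrank : ∀ V : Submodule (ZMod 2) ((Fin n → ZMod 2) × (Fin m → ZMod 2)),
      Module.finrank (ZMod 2) ↥(V.map (f.prodMap g)) = Module.finrank (ZMod 2) ↥V := by
    intro V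
    exact (Submodule.equivMapOfInjective _ hφ V).finrank_eq.symm
  unfold Nsub
  symm
  refine Nat.card_congr (Equiv.ofBijective (fun V => ⟨V.1.map (f.prodMap g), ?_, ?_, ?_⟩) ⟨?_, ?_⟩)
  · rw [hrank, V.2.1]
  · rw [hfst, V.2.2.1, Submodule.map_top, hfr]
  · rw [hsnd, V.2.2.2, Submodule.map_top, hgr]
  · intro V W h
    exact Subtype.ext (Submodule.map_injective_of_injective hφ (congrArg Subtype.val h))
  · rintro ⟨W, hW, hW1, hW2⟩
    have hle : W ≤ LinearMap.range (f.prodMap g) := by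
      rintro ⟨x, y⟩ hxy
      have hx : x ∈ LinearMap.range f := by
        rw [hfr, ← hW1]
        exact ⟨(x, y), hxy, rfl⟩
      have hy : y ∈ LinearMap.range g := by
        rw [hgr, ← hW2]
        exact ⟨(x, y), hxy, rfl⟩
      obtain ⟨u, rfl⟩ := hx
      obtain ⟨v, rfl⟩ := hy
      exact ⟨(u, v), rfl⟩
    have hmap : (W.comap (f.prodMap g)).map (f.prodMap g) = W :=
      Submodule.map_comap_eq_self hle
    refine ⟨⟨W.comap (f.prodMap g), ?_, ?_, ?_⟩, Subtype.ext hmap⟩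
    · rw [← hrank, hmap, hW]
    · apply Submodule.map_injective_of_injective hf
      rw [← hfst, hmap, hW1, Submodule.map_top, hfr]
    · apply Submodule.map_injective_of_injective hg
      rw [← hsnd, hmap, hW2, Submodule.map_top, hgr]
end

section
/- For every τ₁, τ₂ ∈ ℍ₁ (complex numbers with positive imaginary part), the genus 2 ansatz factors on the decomposable locus: Ξ^{(2)}(τ₁ ⊕ τ₂) = Ξ^{(1)}(τ₁) · Ξ^{(1)}(τ₂), where τ₁ ⊕ τ₂ is the diagonal 2×2 period matrix with entries τ₁, τ₂. -/
open scoped BigOperators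

noncomputable def Gform (g i : ℕ) (τ : Matrix (Fin g) (Fin g) ℂ) : ℂ :=
  Pform g i (2 ^ (4 - i)) τ

noncomputable def Xi1 (τ : Matrix (Fin 1) (Fin 1) ℂ) : ℂ :=
  (1 / 2) * (Gform 1 0 τ - Gform 1 1 τ)

noncomputable def Xi2 (τ : Matrix (Fin 2) (Fin 2) ℂ) : ℂ :=
  (1 / 4) * (Gform 2 0 τ - Gform 2 1 τ + 2 * Gform 2 2 τ)

noncomputable def Xi3 (τ : Matrix (Fin 3) (Fin 3) ℂ) : ℂ :=
  (1 / 8) * (Gform 3 0 τ - Gform 3 1 τ + 2 * Gform 3 2 τ - 8 * Gform 3 3 τ)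

noncomputable def Xi4 (τ : Matrix (Fin 4) (Fin 4) ℂ) : ℂ :=
  (1 / 16) * (Gform 4 0 τ - Gform 4 1 τ + 2 * Gform 4 2 τ - 8 * Gform 4 3 τ +
    64 * Gform 4 4 τ)

/-! ### Analytic part -/

/-- Genus one term. -/
noncomputable def term1 (e d : ZMod 2) (t : ℂ) (n : ℤ) : ℂ :=
  Complex.exp ((Real.pi : ℂ) * Complex.I *
    (((n : ℂ) + (e.val : ℂ) / 2) * t * ((n : ℂ) + (e.val : ℂ) / 2) +
      ((n : ℂ) + (e.val : ℂ) / 2) * (d.val : ℂ)))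

noncomputable def th1 (e d : ZMod 2) (t : ℂ) : ℂ := ∑' n : ℤ, term1 e d t n

lemma term1_summable (e d : ZMod 2) {t : ℂ} (ht : 0 < t.im) :
    Summable (fun n => ‖term1 e d t n‖) := by
  have h := (summable_jacobiTheta₂_term_iff ((e.val : ℂ) / 2 * t + (d.val : ℂ) / 2) t).2 ht
  have h2 := (h.mul_left (Complex.exp ((Real.pi : ℂ) * Complex.I *
    (((e.val : ℂ) / 2) * t * ((e.val : ℂ) / 2) + ((e.val : ℂ) / 2) * (d.val : ℂ))))).norm
  refine h2.congr fun n => ?_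
  congr 1
  rw [jacobiTheta₂_term, term1, ← Complex.exp_add]
  congr 1
  ring

lemma theta_one (v : ThetaChar 1) (τ : Matrix (Fin 1) (Fin 1) ℂ) :
    theta v τ = th1 (v.1 0) (v.2 0) (τ 0 0) := by
  unfold theta th1
  rw [← (Equiv.funUnique (Fin 1) ℤ).symm.tsum_eq]
  refine tsum_congr fun n => ?_
  simp [term1]

lemma th1_odd (t : ℂ) : th1 1 1 t = 0 := by
  have h : th1 1 1 t = - th1 1 1 t := by
    conv_lhs => rw [th1, ← (Equiv.subLeft (-1 : ℤ)).tsum_eq]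
    rw [th1, ← tsum_neg]
    refine tsum_congr fun n => ?_
    have hv : ((1 : ZMod 2).val : ℂ) = 1 := by
      rw [ZMod.val_one]; simp
    have h1 : Complex.exp (((-1 - n : ℤ) : ℂ) * (2 * Real.pi * Complex.I)) = 1 :=
      Complex.exp_int_mul_two_pi_mul_I _
    have h2 := Complex.exp_pi_mul_I
    simp only [term1, hv, Equiv.subLeft_apply]
    have : ∀ x : ℂ, - x = x * (Complex.exp (((-1 - n : ℤ) : ℂ) * (2 * Real.pi * Complex.I)) *
        Complex.exp (Real.pi * Complex.I)) := by
      intro x; rw [h1, h2]; ring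
    rw [this, ← Complex.exp_add, ← Complex.exp_add]
    congr 1
    push_cast
    ring
  have h3 : (2 : ℂ) * th1 1 1 t = 0 := by linear_combination h
  simpa using h3

lemma theta_two (v : ThetaChar 2) (τ₁ τ₂ : Matrix (Fin 1) (Fin 1) ℂ)
    (h₁ : 0 < (τ₁ 0 0).im) (h₂ : 0 < (τ₂ 0 0).im) :
    theta v (blockDiag τ₁ τ₂ : Matrix (Fin 2) (Fin 2) ℂ) =
      th1 (v.1 0) (v.2 0) (τ₁ 0 0) * th1 (v.1 1) (v.2 1) (τ₂ 0 0) := by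
  unfold th1
  rw [tsum_mul_tsum_of_summable_norm (term1_summable _ _ h₁) (term1_summable _ _ h₂)]
  unfold theta
  rw [← (finTwoArrowEquiv ℤ).symm.tsum_eq]
  refine tsum_congr fun n => ?_
  have e00 : (blockDiag τ₁ τ₂ : Matrix (Fin 2) (Fin 2) ℂ) 0 0 = τ₁ 0 0 := rfl
  have e01 : (blockDiag τ₁ τ₂ : Matrix (Fin 2) (Fin 2) ℂ) 0 1 = 0 := rfl
  have e10 : (blockDiag τ₁ τ₂ : Matrix (Fin 2) (Fin 2) ℂ) 1 0 = 0 := rfl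
  have e11 : (blockDiag τ₁ τ₂ : Matrix (Fin 2) (Fin 2) ℂ) 1 1 = τ₂ 0 0 := rfl
  rw [term1, term1, ← Complex.exp_add]
  congr 1
  simp only [Fin.sum_univ_two, e00, e01, e10, e11]
  simp [finTwoArrowEquiv]
  ring

/-! ### Subspaces of dimension zero and one -/

lemma Gform_zero (g : ℕ) (τ : Matrix (Fin g) (Fin g) ℂ) :
    Gform g 0 τ = theta 0 τ ^ 16 := by
  have : {V : Submodule (ZMod 2) (ThetaChar g) | Module.finrank (ZMod 2) ↥V = 0} = {⊥} := by
    ext V; simp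
  simp only [Gform, Pform, this, finsum_mem_singleton, Pset, Submodule.bot_coe,
    finprod_mem_singleton]
  norm_num

lemma mem_span_two {g : ℕ} {v w : ThetaChar g} :
    w ∈ Submodule.span (ZMod 2) {v} ↔ w = 0 ∨ w = v := by
  rw [Submodule.mem_span_singleton]
  constructor
  · rintro ⟨a, rfl⟩
    have : ∀ a : ZMod 2, a = 0 ∨ a = 1 := by decide
    rcases this a with rfl | rfl <;> simp
  · rintro (rfl | rfl)
    · exact ⟨0, by simp⟩
    · exact ⟨1, by simp⟩

lemma Gform_one (g : ℕ) (τ : Matrix (Fin g) (Fin g) ℂ) :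
    Gform g 1 τ = ∑ v ∈ (Finset.univ : Finset (ThetaChar g)).erase 0,
      (theta 0 τ * theta v τ) ^ 8 := by
  classical
  have hinj : Set.InjOn (fun v : ThetaChar g => Submodule.span (ZMod 2) {v})
      ((Finset.univ : Finset (ThetaChar g)).erase 0) := by
    intro v hv w hw h
    have h1 : v ∈ Submodule.span (ZMod 2) {w} := by
      have hh : Submodule.span (ZMod 2) {v} = Submodule.span (ZMod 2) {w} := h
      rw [← hh]; exact Submodule.mem_span_singleton_self v
    rcases mem_span_two.1 h1 with h0 | h0
    · simp [h0] at hv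
    · exact h0
  have hset : {V : Submodule (ZMod 2) (ThetaChar g) | Module.finrank (ZMod 2) ↥V = 1} =
      (((Finset.univ : Finset (ThetaChar g)).erase 0).image
        (fun v : ThetaChar g => Submodule.span (ZMod 2) {v}) : Finset _) := by
    ext V
    simp only [Set.mem_ofPred_eq, Finset.coe_image, Set.mem_image, Finset.mem_coe,
      Finset.mem_erase, Finset.mem_univ, and_true]
    constructor
    · intro h
      obtain ⟨⟨v, hvV⟩, hv0, hs⟩ := finrank_eq_one_iff'.1 h
      refine ⟨v, fun h0 => hv0 (Subtype.ext h0), le_antisymm ?_ ?_⟩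
      · rw [Submodule.span_singleton_le_iff_mem]; exact hvV
      · intro w hw
        obtain ⟨c, hc⟩ := hs ⟨w, hw⟩
        exact Submodule.mem_span_singleton.2 ⟨c, congrArg Subtype.val hc⟩
    · rintro ⟨v, hv, rfl⟩
      exact finrank_span_singleton hv
  rw [Gform, Pform, hset, finsum_mem_coe_finset, Finset.sum_image hinj]
  refine Finset.sum_congr rfl fun v hv => ?_
  have hv0 : v ≠ 0 := (Finset.mem_erase.1 hv).1
  have : ((Submodule.span (ZMod 2) {v} : Submodule (ZMod 2) (ThetaChar g)) :
      Set (ThetaChar g)) = {0, v} := by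
    ext w; simp only [SetLike.mem_coe, mem_span_two]; rfl
  rw [Pset, this, finprod_mem_pair hv0.symm]
  norm_num

/-! ### Planes in genus two -/

def crd (s : Bool) (i : Fin 2) (v : ThetaChar 2) : ZMod 2 := bif s then v.1 i else v.2 i

def plane (p : Bool × Bool) : Submodule (ZMod 2) (ThetaChar 2) where
  carrier := {v | crd p.1 0 v = 0 ∧ crd p.2 1 v = 0}
  zero_mem' := by rcases p with ⟨_ | _, _ | _⟩ <;> simp [crd]
  add_mem' := by
    rcases p with ⟨_ | _, _ | _⟩ <;> simp +contextual [crd]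
  smul_mem' := by
    rcases p with ⟨_ | _, _ | _⟩ <;> simp +contextual [crd]

def planeF (p : Bool × Bool) : Finset (ThetaChar 2) :=
  Finset.univ.filter fun v => crd p.1 0 v = 0 ∧ crd p.2 1 v = 0

lemma plane_coe (p : Bool × Bool) : (plane p : Set (ThetaChar 2)) = planeF p := by
  ext v; simp [plane, planeF]

lemma planeF_card : ∀ p, (planeF p).card = 4 := by decide

lemma finrank_two_iff (V : Submodule (ZMod 2) (ThetaChar 2)) :
    Module.finrank (ZMod 2) V = 2 ↔ Nat.card V = 4 := by
  rw [Module.natCard_eq_pow_finrank (K := ZMod 2) (V := V), Nat.card_zmod]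
  constructor
  · intro h; rw [h]; norm_num
  · intro h; exact Nat.pow_right_injective (le_refl 2) (by simpa using h)

lemma plane_card (p : Bool × Bool) : Nat.card (plane p) = 4 := by
  have : Nat.card (plane p) = Set.ncard (plane p : Set (ThetaChar 2)) := rfl
  rw [this, plane_coe, Set.ncard_coe_finset, planeF_card]

lemma planeF_inj : Function.Injective planeF := by decide

lemma plane_inj : Function.Injective plane := by
  intro p q h
  apply planeF_inj
  have : (plane p : Set (ThetaChar 2)) = plane q := by rw [h]
  rw [plane_coe, plane_coe] at this
  exact_mod_cast this

lemma plane_of_good (V : Submodule (ZMod 2) (ThetaChar 2))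
    (hr : Module.finrank (ZMod 2) V = 2)
    (hV : ∀ v ∈ V, ∀ i, ¬ (v.1 i = 1 ∧ v.2 i = 1)) : ∃ p, plane p = V := by
  have key : ∀ i : Fin 2, ∃ s : Bool, ∀ v ∈ V, crd s i v = 0 := by
    intro i
    have z : ∀ a : ZMod 2, a = 0 ∨ a = 1 := by decide
    by_cases h : ∃ v ∈ V, v.1 i = 1
    · obtain ⟨v, hv, h1⟩ := h
      refine ⟨false, fun w hw => ?_⟩
      have a1 := hV v hv i
      have a2 := hV w hw i
      have a3 := hV (v + w) (V.add_mem hv hw) i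
      simp only [Prod.fst_add, Prod.snd_add, Pi.add_apply, crd, cond_false] at *
      generalize v.1 i = a at *
      generalize v.2 i = b at *
      generalize w.1 i = c at *
      generalize w.2 i = d at *
      revert a b c d
      decide
    · refine ⟨true, fun w hw => ?_⟩
      rcases z (w.1 i) with h0 | h0
      · exact h0
      · exact absurd ⟨w, hw, h0⟩ h
  obtain ⟨s, hs⟩ := key 0
  obtain ⟨t, ht⟩ := key 1
  refine ⟨(s, t), ?_⟩
  symm
  apply Submodule.eq_of_le_of_finrank_eq
  · intro v hv
    exact ⟨hs v hv, ht v hv⟩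
  · rw [hr, (finrank_two_iff _).2 (plane_card _)]

lemma Gform_two (τ : Matrix (Fin 2) (Fin 2) ℂ)
    (hτ : ∀ v : ThetaChar 2, ∀ i, v.1 i = 1 → v.2 i = 1 → theta v τ = 0) :
    Gform 2 2 τ = ∑ p : Bool × Bool, (∏ v ∈ planeF p, theta v τ) ^ 4 := by
  classical
  rw [Gform, Pform, finsum_mem_eq_sum_of_inter_support_eq (t := Finset.univ.image plane),
    Finset.sum_image plane_inj.injOn]
  · refine Finset.sum_congr rfl fun p _ => ?_
    rw [Pset, plane_coe, finprod_mem_coe_finset]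
    norm_num
  · ext V
    simp only [Set.mem_inter_iff, Set.mem_ofPred_eq, Function.mem_support, Finset.coe_image,
      Finset.coe_univ, Set.image_univ, Set.mem_range, and_congr_left_iff]
    intro hne
    constructor
    · intro hr
      apply plane_of_good V hr
      rintro v hv i ⟨h1, h2⟩
      apply hne
      have : Pset (V : Set (ThetaChar 2)) τ = 0 := by
        rw [Pset, finprod_mem_eq_finite_toFinset_prod _ (Set.toFinite _)]
        exact Finset.prod_eq_zero (i := v) (by simpa using hv) (hτ v i h1 h2)
      rw [this]; simp
    · rintro ⟨p, rfl⟩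
      exact (finrank_two_iff _).2 (plane_card _)

/-! ### Final computation -/

lemma sum_char2 (f : ThetaChar 2 → ℂ) : ∑ v, f v =
    ∑ a : ZMod 2, ∑ b : ZMod 2, ∑ c : ZMod 2, ∑ d : ZMod 2, f (![a, b], ![c, d]) := by
  rw [Fintype.sum_prod_type, ← (finTwoArrowEquiv (ZMod 2)).symm.sum_comp, Fintype.sum_prod_type]
  refine Finset.sum_congr rfl fun a _ => Finset.sum_congr rfl fun b _ => ?_
  rw [← (finTwoArrowEquiv (ZMod 2)).symm.sum_comp, Fintype.sum_prod_type]
  rfl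

lemma sum_char1 (f : ThetaChar 1 → ℂ) : ∑ v, f v =
    ∑ a : ZMod 2, ∑ b : ZMod 2, f (fun _ => a, fun _ => b) := by
  rw [Fintype.sum_prod_type, ← (Equiv.funUnique (Fin 1) (ZMod 2)).symm.sum_comp]
  refine Finset.sum_congr rfl fun a _ => ?_
  rw [← (Equiv.funUnique (Fin 1) (ZMod 2)).symm.sum_comp]
  rfl

lemma sum_zmod2 (f : ZMod 2 → ℂ) : ∑ a, f a = f 0 + f 1 := Fin.sum_univ_two f

lemma planeF_eq (p : Bool × Bool) : planeF p =
    {(![0, 0], ![0, 0]),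
     (![bif p.1 then 0 else 1, 0], ![bif p.1 then 1 else 0, 0]),
     (![0, bif p.2 then 0 else 1], ![0, bif p.2 then 1 else 0]),
     (![bif p.1 then 0 else 1, bif p.2 then 0 else 1],
      ![bif p.1 then 1 else 0, bif p.2 then 1 else 0])} := by
  revert p; decide

lemma prod_planeF (p : Bool × Bool) (f : ThetaChar 2 → ℂ) : ∏ v ∈ planeF p, f v =
    f (![0, 0], ![0, 0]) *
     (f (![bif p.1 then 0 else 1, 0], ![bif p.1 then 1 else 0, 0]) *
     (f (![0, bif p.2 then 0 else 1], ![0, bif p.2 then 1 else 0]) *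
     f (![bif p.1 then 0 else 1, bif p.2 then 0 else 1],
      ![bif p.1 then 1 else 0, bif p.2 then 1 else 0]))) := by
  rw [planeF_eq, Finset.prod_insert, Finset.prod_insert, Finset.prod_insert,
    Finset.prod_singleton]
  all_goals revert p; decide

lemma siegel_im {τ : Matrix (Fin 1) (Fin 1) ℂ} (h : IsSiegel τ) : 0 < (τ 0 0).im := by
  have := h.2.diag_pos (i := 0)
  simpa using this

lemma Xi1_eq (τ : Matrix (Fin 1) (Fin 1) ℂ) : Xi1 τ = (1 / 2) * th1 0 0 (τ 0 0) ^ 8 *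
    (th1 0 0 (τ 0 0) ^ 8 - th1 0 1 (τ 0 0) ^ 8 - th1 1 0 (τ 0 0) ^ 8) := by
  rw [Xi1, Gform_zero, Gform_one, Finset.sum_erase_eq_sub (Finset.mem_univ _), sum_char1]
  simp only [sum_zmod2, theta_one, Prod.fst_zero, Prod.snd_zero, Pi.zero_apply, th1_odd]
  ring

theorem Xi2_factorization (τ₁ τ₂ : Matrix (Fin 1) (Fin 1) ℂ)
    (hτ₁ : IsSiegel τ₁) (hτ₂ : IsSiegel τ₂) :
    Xi2 (blockDiag τ₁ τ₂) = Xi1 τ₁ * Xi1 τ₂ := by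
  have h₁ := siegel_im hτ₁
  have h₂ := siegel_im hτ₂
  have hT := fun v => theta_two v τ₁ τ₂ h₁ h₂
  have h0 : ∀ v : ThetaChar 2, ∀ i, v.1 i = 1 → v.2 i = 1 →
      theta v (blockDiag τ₁ τ₂ : Matrix (Fin 2) (Fin 2) ℂ) = 0 := by
    intro v i a b
    rw [hT]
    fin_cases i
    · have ha : v.1 0 = 1 := a
      have hb : v.2 0 = 1 := b
      rw [ha, hb, th1_odd, zero_mul]
    · have ha : v.1 1 = 1 := a
      have hb : v.2 1 = 1 := b
      rw [ha, hb, th1_odd, mul_zero]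
  rw [Xi1_eq, Xi1_eq, Xi2, Gform_zero, Gform_one, Gform_two _ h0,
    Finset.sum_erase_eq_sub (Finset.mem_univ _), sum_char2, Fintype.sum_prod_type]
  simp only [sum_zmod2, Fintype.sum_bool, prod_planeF, hT, Prod.fst_zero, Prod.snd_zero,
    Pi.zero_apply, cond_true, cond_false, Matrix.cons_val_zero, Matrix.cons_val_one, th1_odd]
  ring
end

section
/- Let Δ be an even characteristic in 𝔽₂^{2g} and let V be an 𝔽₂-linear subspace of 𝔽₂^{2g} such that every element of the coset V + Δ is an even characteristic. Then V is totally isotropic for the Weil symplectic pairing: ⟨v,w⟩ = 0 for all v, w ∈ V. -/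
open scoped BigOperators

theorem purely_even_coset_isotropic (g : ℕ) (Δ : ThetaChar g) (hΔ : evenChar Δ)
    (V : Submodule (ZMod 2) (ThetaChar g))
    (h : ∀ v ∈ V, evenChar (v + Δ)) :
    ∀ v ∈ V, ∀ w ∈ V, weil v w = 0 := by
  intro v hv w hw
  have h1 := h v hv
  have h2 := h w hw
  have h3 := h (v + w) (V.add_mem hv hw)
  unfold evenChar at hΔ h1 h2 h3
  have key : weil v w = (∑ i, (v + w + Δ).1 i * (v + w + Δ).2 i)
      - (∑ i, (v + Δ).1 i * (v + Δ).2 i) - (∑ i, (w + Δ).1 i * (w + Δ).2 i)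
      + ∑ i, Δ.1 i * Δ.2 i := by
    unfold weil
    rw [← Finset.sum_add_distrib, ← Finset.sum_sub_distrib, ← Finset.sum_sub_distrib,
      ← Finset.sum_add_distrib]
    refine Finset.sum_congr rfl fun i _ => ?_
    simp only [Prod.fst_add, Prod.snd_add, Pi.add_apply]
    ring
  rw [key, h1, h2, h3, hΔ]
  simp
end
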